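/- Let n ≥ 5 and s ≥ 2 be integers, let P be a non-trivial protocol on C_n with s colours and let X be uniformly distributed on Fix(P). Then H_1^5 ≤ 3 + h(2,4) − I(X_2; X_4 | X_3). -/

import Mathlib

open Finset

/-- Base-`s` Shannon entropy of the random variable `g(X)` where `X` is uniformly
distributed on the finite set `F`. -/
noncomputable def entOf (s : ℕ) {α β : Type} [DecidableEq β] [Fintype β]
    (F : Finset α) (g : α → β) : ℝ :=
  -∑ y : β, (((F.filter fun c => g c = y).card : ℝ) / (F.card : ℝ)) *
      Real.logb s (((F.filter fun c => g c = y).card : ℝ) / (F.card : ℝ))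

/-- The fixed set of a protocol `f` on the cycle `C_n` with `s` colours:
all colourings `c` with `c i = f i (c (i-1), c (i+1))` for every vertex `i`
(vertex indices taken modulo `n`). -/
def cycleFix (n s : ℕ) [NeZero n] (f : ZMod n → Fin s × Fin s → Fin s) :
    Finset (ZMod n → Fin s) :=
  Finset.univ.filter fun c => ∀ i, c i = f i (c (i - 1), c (i + 1))

/-- `h(i₁,…,i_k)`: entropy (base `s`) of the tuple of coordinates of `X ∈_u F`
indexed by the set `T` of integers (interpreted modulo `n`). -/
noncomputable def entT (n s : ℕ) [NeZero n] (F : Finset (ZMod n → Fin s))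
    (T : Finset ℤ) : ℝ :=
  entOf s F (fun c => fun i : {x // x ∈ T} => c ((i.1 : ℤ) : ZMod n))

/-- `H_j^k = h(j,j+1,…,k-1) + h(j+1,j+2,…,k)`. -/
noncomputable def entH (n s : ℕ) [NeZero n] (F : Finset (ZMod n → Fin s))
    (j k : ℤ) : ℝ :=
  entT n s F (Finset.Icc j (k - 1)) + entT n s F (Finset.Icc (j + 1) k)


section Helpers
variable {α β γ δ : Type}

theorem aux_sum_F (F : Finset α) [DecidableEq β] [Fintype β] (g : α → β) (φ : β → ℝ) :
    ∑ y : β, ((F.filter fun c => g c = y).card : ℝ) * φ y = ∑ c ∈ F, φ (g c) := by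
  rw [← Finset.sum_fiberwise F g (fun c => φ (g c))]
  refine Finset.sum_congr rfl fun y _ => ?_
  rw [Finset.sum_congr rfl (g := fun _ => φ y)]
  · simp
  · intro c hc
    rw [(Finset.mem_filter.1 hc).2]

theorem entOf_eq (s : ℕ) (F : Finset α) [DecidableEq β] [Fintype β] (g : α → β) :
    entOf s F g = -((∑ c ∈ F, Real.logb s
      (((F.filter fun c' => g c' = g c).card : ℝ) / (F.card : ℝ))) / (F.card : ℝ)) := by
  unfold entOf
  rw [← aux_sum_F F g (fun y => Real.logb s
      (((F.filter fun c' => g c' = y).card : ℝ) / (F.card : ℝ))), Finset.sum_div]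
  congr 1
  refine Finset.sum_congr rfl fun y _ => ?_
  ring

theorem entOf_congr (s : ℕ) (F : Finset α) [DecidableEq β] [Fintype β]
    [DecidableEq γ] [Fintype γ] (g : α → β) (k : α → γ)
    (h : ∀ c ∈ F, ∀ d ∈ F, g c = g d ↔ k c = k d) : entOf s F g = entOf s F k := by
  rw [entOf_eq, entOf_eq]
  congr 2
  refine Finset.sum_congr rfl fun c hc => ?_
  rw [Finset.filter_congr fun d hd => h d hd c hc]

theorem card_pos' (F : Finset α) [DecidableEq β] (g : α → β) (c : α) (hc : c ∈ F) :
    (0 : ℝ) < ((F.filter fun c' => g c' = g c).card : ℝ) := by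
  have h : 0 < (F.filter fun c' => g c' = g c).card :=
    Finset.card_pos.2 ⟨c, by simp [hc]⟩
  exact_mod_cast h

theorem gibbs (s : ℕ) (hs : 2 ≤ s) (F : Finset α) (hF : F.Nonempty) [DecidableEq β] [Fintype β]
    (g : α → β) (q : β → ℝ) (h0 : ∀ y, 0 ≤ q y) (hq : ∀ c ∈ F, 0 < q (g c))
    (h1 : ∑ y, q y ≤ 1) :
    entOf s F g ≤ -((∑ c ∈ F, Real.logb s (q (g c))) / (F.card : ℝ)) := by
  have hN : (0 : ℝ) < F.card := by exact_mod_cast Finset.card_pos.2 hF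
  have hl : 0 < Real.log s := Real.log_pos (by exact_mod_cast hs)
  rw [entOf_eq, neg_le_neg_iff]
  refine div_le_div_of_nonneg_right ?_ hN.le
  simp only [Real.logb, ← Finset.sum_div]
  refine div_le_div_of_nonneg_right ?_ hl.le
  rw [← sub_nonpos, ← Finset.sum_sub_distrib]
  have key : ∀ c ∈ F, Real.log (q (g c)) -
      Real.log (((F.filter fun c' => g c' = g c).card : ℝ) / (F.card : ℝ)) ≤
      F.card * q (g c) / ((F.filter fun c' => g c' = g c).card : ℝ) - 1 := by
    intro c hc
    have hp := card_pos' F g c hc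
    have hq' := hq c hc
    rw [← Real.log_div hq'.ne' (by positivity)]
    refine (Real.log_le_sub_one_of_pos (by positivity)).trans (le_of_eq ?_)
    field_simp
  refine (Finset.sum_le_sum key).trans ?_
  rw [Finset.sum_sub_distrib]
  rw [← aux_sum_F F g (fun y => F.card * q y / ((F.filter fun c' => g c' = y).card : ℝ))]
  have : ∑ y : β, ((F.filter fun c => g c = y).card : ℝ) *
      (F.card * q y / ((F.filter fun c' => g c' = y).card : ℝ)) ≤ ∑ y : β, F.card * q y := by
    refine Finset.sum_le_sum fun y _ => ?_
    by_cases h : ((F.filter fun c => g c = y).card : ℝ) = 0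
    · rw [h, zero_mul]; exact mul_nonneg hN.le (h0 y)
    · rw [mul_div_cancel₀ _ h]
  rw [← Finset.mul_sum] at this
  have h2 : (F.card : ℝ) * ∑ y, q y ≤ F.card * 1 := mul_le_mul_of_nonneg_left h1 hN.le
  simp only [Finset.sum_const, nsmul_eq_mul]
  linarith

theorem sum_card (F : Finset α) [DecidableEq β] [Fintype β] (g : α → β) :
    ∑ y : β, ((F.filter fun c => g c = y).card : ℝ) = F.card := by
  have := aux_sum_F F g (fun _ => 1)
  simpa using this

theorem sum_card_pair (F : Finset α) [DecidableEq β] [Fintype β] [DecidableEq γ]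
    (g : α → β) (k : α → γ) (z : γ) :
    ∑ y : β, ((F.filter fun c => (g c, k c) = (y, z)).card : ℝ) =
      ((F.filter fun c => k c = z).card : ℝ) := by
  rw [← sum_card (F.filter fun c => k c = z) g]
  refine Finset.sum_congr rfl fun y _ => ?_
  rw [Finset.filter_filter]
  congr 2
  ext c
  simp [and_comm]

theorem entOf_submod (s : ℕ) (hs : 2 ≤ s) (F : Finset α) (hF : F.Nonempty)
    [DecidableEq β] [Fintype β] [DecidableEq γ] [Fintype γ] [DecidableEq δ] [Fintype δ]
    (a : α → β) (b : α → γ) (k : α → δ) :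
    entOf s F (fun c => (a c, b c, k c)) + entOf s F k ≤
      entOf s F (fun c => (a c, k c)) + entOf s F (fun c => (b c, k c)) := by
  have hN : (0 : ℝ) < F.card := by exact_mod_cast Finset.card_pos.2 hF
  have hg := gibbs s hs F hF (fun c => (a c, b c, k c))
    (fun y => ((F.filter fun c => (a c, k c) = (y.1, y.2.2)).card : ℝ) *
      ((F.filter fun c => (b c, k c) = (y.2.1, y.2.2)).card : ℝ) /
      (((F.filter fun c => k c = y.2.2).card : ℝ) * F.card)) (fun y => by positivity)
    (fun c hc => by
      have h1 := card_pos' F (fun c => (a c, k c)) c hc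
      have h2 := card_pos' F (fun c => (b c, k c)) c hc
      have h3 := card_pos' F k c hc
      dsimp only at h1 h2 h3 ⊢
      positivity)
    (by
      rw [Fintype.sum_prod_type_right]
      simp only
      have : ∀ y : γ × δ, ∑ x : β, ((F.filter fun c => (a c, k c) = (x, y.2)).card : ℝ) *
          ((F.filter fun c => (b c, k c) = (y.1, y.2)).card : ℝ) /
          (((F.filter fun c => k c = y.2).card : ℝ) * F.card) =
          ((F.filter fun c => k c = y.2).card : ℝ) *
          ((F.filter fun c => (b c, k c) = (y.1, y.2)).card : ℝ) /
          (((F.filter fun c => k c = y.2).card : ℝ) * F.card) := by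
        intro y
        rw [← Finset.sum_div, ← Finset.sum_mul, sum_card_pair]
      rw [Finset.sum_congr rfl fun y _ => this y, Fintype.sum_prod_type_right]
      simp only
      have h2 : ∀ z : δ, ∑ y : γ, ((F.filter fun c => k c = z).card : ℝ) *
          ((F.filter fun c => (b c, k c) = (y, z)).card : ℝ) /
          (((F.filter fun c => k c = z).card : ℝ) * F.card) =
          ((F.filter fun c => k c = z).card : ℝ) / F.card := by
        intro z
        rw [← Finset.sum_div, ← Finset.mul_sum, sum_card_pair]
        by_cases h : ((F.filter fun c => k c = z).card : ℝ) = 0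
        · simp [h]
        · field_simp
      rw [Finset.sum_congr rfl fun y _ => h2 y, ← Finset.sum_div, sum_card, div_self hN.ne'])
  have e : ∑ c ∈ F, Real.logb s (((F.filter fun c' => (a c', k c') = (a c, k c)).card : ℝ) *
      ((F.filter fun c' => (b c', k c') = (b c, k c)).card : ℝ) /
      (((F.filter fun c' => k c' = k c).card : ℝ) * F.card)) =
      ∑ c ∈ F, Real.logb s (((F.filter fun c' => (a c', k c') = (a c, k c)).card : ℝ) / F.card)
      + ∑ c ∈ F, Real.logb s (((F.filter fun c' => (b c', k c') = (b c, k c)).card : ℝ) / F.card)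
      - ∑ c ∈ F, Real.logb s (((F.filter fun c' => k c' = k c).card : ℝ) / F.card) := by
    rw [← Finset.sum_add_distrib, ← Finset.sum_sub_distrib]
    refine Finset.sum_congr rfl fun c hc => ?_
    have h1 := card_pos' F (fun c => (a c, k c)) c hc
    have h2 := card_pos' F (fun c => (b c, k c)) c hc
    have h3 := card_pos' F k c hc
    rw [Real.logb_div (by positivity) (by positivity), Real.logb_mul h1.ne' h2.ne',
      Real.logb_mul h3.ne' hN.ne', Real.logb_div h1.ne' hN.ne', Real.logb_div h2.ne' hN.ne',
      Real.logb_div h3.ne' hN.ne']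
    ring
  dsimp only at hg
  rw [e] at hg
  rw [entOf_eq s F k, entOf_eq s F (fun c => (a c, k c)), entOf_eq s F (fun c => (b c, k c))]
  refine (add_le_add_left hg _).trans (le_of_eq ?_)
  ring

theorem entOf_one (s : ℕ) (hs : 2 ≤ s) (F : Finset α) (hF : F.Nonempty) (a : α → Fin s) :
    entOf s F a ≤ 1 := by
  have hN : (0 : ℝ) < F.card := by exact_mod_cast Finset.card_pos.2 hF
  have hs0 : (0 : ℝ) < s := by positivity
  have hs1 : (1 : ℝ) < s := by exact_mod_cast hs
  refine (gibbs s hs F hF a (fun _ => 1 / s) (fun _ => by positivity) (fun _ _ => by positivity)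
    (by simp [hs0.ne'])).trans (le_of_eq ?_)
  simp only [one_div, Real.logb_inv, Real.logb_self_eq_one hs1, Finset.sum_const, nsmul_eq_mul]
  field_simp

theorem entOf_pair (s : ℕ) (hs : 2 ≤ s) (F : Finset α) (hF : F.Nonempty)
    [DecidableEq β] [Fintype β] (b : α → β) (a : α → Fin s) :
    entOf s F (fun c => (a c, b c)) ≤ 1 + entOf s F b := by
  have h := entOf_submod s hs F hF a b (fun _ => ())
  have h0 : entOf s F (fun _ : α => ()) = 0 := by
    have hN : (0 : ℝ) < F.card := by exact_mod_cast Finset.card_pos.2 hF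
    simp [entOf, hN.ne']
  have h1 : entOf s F (fun c => (a c, ())) = entOf s F a := entOf_congr _ _ _ _ (by simp)
  have h2 : entOf s F (fun c => (b c, ())) = entOf s F b := entOf_congr _ _ _ _ (by simp)
  have h3 : entOf s F (fun c => (a c, b c, ())) = entOf s F (fun c => (a c, b c)) :=
    entOf_congr _ _ _ _ (by simp)
  have := entOf_one s hs F hF a
  linarith

theorem entT_eq (n s : ℕ) [NeZero n] (F : Finset (ZMod n → Fin s)) (T : Finset ℤ)
    [DecidableEq γ] [Fintype γ] (k : (ZMod n → Fin s) → γ)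
    (h : ∀ c ∈ F, ∀ d ∈ F, (∀ i ∈ T, c (i : ZMod n) = d (i : ZMod n)) ↔ k c = k d) :
    entT n s F T = entOf s F k := by
  unfold entT
  refine entOf_congr _ _ _ _ fun c hc d hd => ?_
  rw [← h c hc d hd]
  simp [funext_iff]

end Helpers

/-- Let `n ≥ 5` and `s ≥ 2`, let `P` be a non-trivial protocol on
`C_n` with `s` colours and let `X` be uniform on `Fix(P)`.  Then
`H_1^5 ≤ 3 + h(2,4) − I(X₂; X₄ | X₃)`, where the conditional mutual information is
`I(A;B|C) = H(A,C) + H(B,C) − H(A,B,C) − H(C)`. -/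
theorem cycle_guessing_stmt10 (n s : ℕ) [NeZero n] (hn : 5 ≤ n) (hs : 2 ≤ s)
    (f : ZMod n → Fin s × Fin s → Fin s)
    (hne : (cycleFix n s f).Nonempty) :
    entH n s (cycleFix n s f) 1 5 ≤
      3 + entT n s (cycleFix n s f) {2, 4} -
        (entT n s (cycleFix n s f) {2, 3} + entT n s (cycleFix n s f) {3, 4}
          - entT n s (cycleFix n s f) {2, 3, 4} - entT n s (cycleFix n s f) {3}) := by
  set F := cycleFix n s f with hFdef
  have fix : ∀ c ∈ F, ∀ i j k : ℤ, j = i - 1 → k = i + 1 →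
      c (i : ZMod n) = f (i : ZMod n) (c (j : ZMod n), c (k : ZMod n)) := by
    intro c hc i j k hj hk
    subst hj hk
    have := (Finset.mem_filter.1 hc).2 (i : ZMod n)
    simpa using this
  let x : ℤ → (ZMod n → Fin s) → Fin s := fun i c => c (i : ZMod n)
  have fx : ∀ c ∈ F, ∀ d ∈ F, ∀ i j k : ℤ, j = i - 1 → k = i + 1 →
      x j c = x j d → x k c = x k d → x i c = x i d := by
    intro c hc d hd i j k hj hk h1 h2
    simp only [x] at h1 h2 ⊢
    rw [fix c hc i j k hj hk, fix d hd i j k hj hk, h1, h2]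
  have i1 : Finset.Icc (1 : ℤ) (5 - 1) = {1, 2, 3, 4} := by decide
  have i2 : Finset.Icc (1 + 1 : ℤ) 5 = {2, 3, 4, 5} := by decide
  unfold entH
  rw [i1, i2]
  have s1 := entOf_submod s hs F hne (x 1) (x 4) (fun c => (x 2 c, x 3 c))
  have s2 := entOf_submod s hs F hne (x 5) (x 2) (fun c => (x 3 c, x 4 c))
  have p1 := entOf_pair s hs F hne (x 3) (x 1)
  have p2 := entOf_pair s hs F hne (x 3) (x 5)
  have p3 := entOf_one s hs F hne (x 3)
  have g2 := fun c hc d hd => fx c hc d hd 2 1 3 (by norm_num) (by norm_num)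
  have g3 := fun c hc d hd => fx c hc d hd 3 2 4 (by norm_num) (by norm_num)
  have g4 := fun c hc d hd => fx c hc d hd 4 3 5 (by norm_num) (by norm_num)
  have e13 : entOf s F (fun c => (x 1 c, x 2 c, x 3 c)) = entOf s F (fun c => (x 1 c, x 3 c)) :=
    entOf_congr _ _ _ _ fun c hc d hd => by
      have := g2 c hc d hd
      simp only [Prod.mk.injEq]; tauto
  have e35 : entOf s F (fun c => (x 5 c, x 3 c, x 4 c)) = entOf s F (fun c => (x 5 c, x 3 c)) :=
    entOf_congr _ _ _ _ fun c hc d hd => by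
      have := g4 c hc d hd
      simp only [Prod.mk.injEq]; tauto
  have e24 : entOf s F (fun c => (x 4 c, x 2 c, x 3 c)) =
      entOf s F (fun c => (x 2 c, x 3 c, x 4 c)) :=
    entOf_congr _ _ _ _ fun c hc d hd => by
      simp only [Prod.mk.injEq]; tauto
  rw [entT_eq n s F {1, 2, 3, 4} (fun c => (x 1 c, x 4 c, x 2 c, x 3 c)) (fun c hc d hd => by
      have := g3 c hc d hd
      simp only [x, Prod.mk.injEq, Finset.mem_insert, Finset.mem_singleton, forall_eq_or_imp,
        forall_eq] at this ⊢ <;> tauto),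
    entT_eq n s F {2, 3, 4, 5} (fun c => (x 5 c, x 2 c, x 3 c, x 4 c)) (fun c hc d hd => by
      have := g3 c hc d hd
      simp only [x, Prod.mk.injEq, Finset.mem_insert, Finset.mem_singleton, forall_eq_or_imp,
        forall_eq] at this ⊢ <;> tauto),
    entT_eq n s F {2, 4} (fun c => (x 2 c, x 3 c, x 4 c)) (fun c hc d hd => by
      have := g3 c hc d hd
      simp only [x, Prod.mk.injEq, Finset.mem_insert, Finset.mem_singleton, forall_eq_or_imp,
        forall_eq] at this ⊢ <;> tauto),
    entT_eq n s F {2, 3} (fun c => (x 2 c, x 3 c)) (fun c hc d hd => by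
      have := g3 c hc d hd
      simp only [x, Prod.mk.injEq, Finset.mem_insert, Finset.mem_singleton, forall_eq_or_imp,
        forall_eq] at this ⊢ <;> tauto),
    entT_eq n s F {3, 4} (fun c => (x 3 c, x 4 c)) (fun c hc d hd => by
      have := g3 c hc d hd
      simp only [x, Prod.mk.injEq, Finset.mem_insert, Finset.mem_singleton, forall_eq_or_imp,
        forall_eq] at this ⊢ <;> tauto),
    entT_eq n s F {2, 3, 4} (fun c => (x 2 c, x 3 c, x 4 c)) (fun c hc d hd => by
      have := g3 c hc d hd
      simp only [x, Prod.mk.injEq, Finset.mem_insert, Finset.mem_singleton, forall_eq_or_imp,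
        forall_eq] at this ⊢ <;> tauto),
    entT_eq n s F {3} (x 3) (fun c hc d hd => by
      have := g3 c hc d hd
      simp only [x, Prod.mk.injEq, Finset.mem_insert, Finset.mem_singleton, forall_eq_or_imp,
        forall_eq] at this ⊢ <;> tauto)]
  linarith
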